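/- There exists c > 0 such that for all sufficiently large n the following holds. Let H be a 3-graph on n vertices with δ(H) ≥ 0.8·C(n−1,2) and let x be any vertex of H. Then: (a) |T^x| ≥ 0.296262·C(n−1,3); (b) |T^x ∩ H'| ≥ 0.005·C(n−1,3); (c) the 3-graph T^x ∩ H' contains at least c·n^6 copies of K_{2,2,2}. -/

import Mathlib

open Finset
open scoped Classical

/-- The co-degree of a pair of vertices in a 3-graph `H`. -/
def coDeg {V : Type} [DecidableEq V] (H : Finset (Finset V)) (u v : V) : ℕ :=
  (H.filter fun e => u ∈ e ∧ v ∈ e).card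

/-- The subhypergraph `H'` of `H` consisting of all edges containing at least one
`(1/3)`-large pair, i.e. a pair of co-degree at least `(1/3)(n-2)`. -/
noncomputable def largeSub {V : Type} [DecidableEq V] [Fintype V]
    (H : Finset (Finset V)) : Finset (Finset V) :=
  H.filter fun e => ∃ u ∈ e, ∃ v ∈ e, u ≠ v ∧
    (1 / 3 : ℝ) * ((Fintype.card V : ℝ) - 2) ≤ (coDeg H u v : ℝ)

/-- `T^x`: the family of vertex sets of triangles in the link graph of `x` in `H'`, i.e.
3-element sets all of whose pairs together with `x` form edges of `H'`. -/
noncomputable def triLink {V : Type} [DecidableEq V] [Fintype V]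
    (H : Finset (Finset V)) (x : V) : Finset (Finset V) :=
  ((Finset.univ : Finset V).powersetCard 3).filter fun s =>
    ∀ p ∈ s.powersetCard 2, insert x p ∈ largeSub H

/-- The (ordered) copies of `K_{h,h,h}` in a 3-graph `H`. -/
noncomputable def tripartiteCopies {V : Type} [DecidableEq V] [Fintype V]
    (H : Finset (Finset V)) (h : ℕ) : Finset (Finset V × Finset V × Finset V) :=
  Finset.univ.filter fun T =>
    T.1.card = h ∧ T.2.1.card = h ∧ T.2.2.card = h ∧
    Disjoint T.1 T.2.1 ∧ Disjoint T.1 T.2.2 ∧ Disjoint T.2.1 T.2.2 ∧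
    ∀ a ∈ T.1, ∀ b ∈ T.2.1, ∀ c ∈ T.2.2, ({a, b, c} : Finset V) ∈ H

/-! Count ordered tuples of vertices, degenerate ones included: this changes densities only by
`O(1/n)`, and averages over independent vertices factor. If `x v` is not a `(1/3)`-large pair then
at least about `2/3` of the pairs `v w` are missing from the link of `x`; as only `0.2` of that link
is missing in total, there are at most about `0.3 n` such `v`. An edge `x v w` of `H` outside `H'`
has both `v` and `w` among them, so the link of `x` in `H'` has density `d ≥ 0.8 - 0.3² = 0.71`, up
to `o(1)`. Goodman's bound then gives `T^x` density at least `d (2 d - 1) ≈ 0.298`. Since `x` was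
arbitrary, `H'` itself has density at least about `0.71`, and inclusion–exclusion leaves
`T^x ∩ H'` a density above `0.005`. Applying Cauchy–Schwarz once in each of the three coordinates
turns a density `ρ` into at least `ρ⁸ n⁶` homomorphisms from `K_{2,2,2}`, of which only `O(n⁵)`
are degenerate. -/

open scoped BigOperators

section Expect

variable {α β γ : Type*} [Fintype α] [Fintype β] [Fintype γ]

lemma expect_prod_type (f : α × β → ℝ) : 𝔼 x, f x = 𝔼 a, 𝔼 b, f (a, b) := by
  rw [← univ_product_univ, expect_product]

lemma sq_expect_le_expect_sq (f : α → ℝ) : (𝔼 a, f a) ^ 2 ≤ 𝔼 a, f a ^ 2 := by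
  simpa only [expect_eq_sum_div_card] using
    sum_div_card_sq_le_sum_sq_div_card (s := univ) (f := f)

lemma sq_expect_eq_expect_mul (f : α → ℝ) : (𝔼 a, f a) ^ 2 = 𝔼 p : α × α, f p.1 * f p.2 := by
  rw [sq, Fintype.expect_mul_expect, expect_prod_type]

lemma sq_expect_expect_le (f : α → β → ℝ) :
    (𝔼 a, 𝔼 b, f a b) ^ 2 ≤ 𝔼 p : α × α, 𝔼 b, f p.1 b * f p.2 b := by
  calc (𝔼 a, 𝔼 b, f a b) ^ 2
    _ = (𝔼 b, 𝔼 a, f a b) ^ 2 := by rw [expect_comm]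
    _ ≤ 𝔼 b, (𝔼 a, f a b) ^ 2 := sq_expect_le_expect_sq _
    _ = 𝔼 b, 𝔼 p : α × α, f p.1 b * f p.2 b := by simp_rw [sq_expect_eq_expect_mul]
    _ = 𝔼 p : α × α, 𝔼 b, f p.1 b * f p.2 b := expect_comm ..

lemma pow_four_expect_expect_le (f : α → β → ℝ) :
    (𝔼 a, 𝔼 b, f a b) ^ 4 ≤
      𝔼 p : α × α, 𝔼 q : β × β, f p.1 q.1 * f p.2 q.1 * (f p.1 q.2 * f p.2 q.2) := by
  calc (𝔼 a, 𝔼 b, f a b) ^ 4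
    _ = ((𝔼 a, 𝔼 b, f a b) ^ 2) ^ 2 := by ring
    _ ≤ (𝔼 p : α × α, 𝔼 b, f p.1 b * f p.2 b) ^ 2 := by
      gcongr
      exact sq_expect_expect_le f
    _ ≤ 𝔼 p : α × α, (𝔼 b, f p.1 b * f p.2 b) ^ 2 := sq_expect_le_expect_sq _
    _ = _ := by simp_rw [sq_expect_eq_expect_mul]

lemma pow_eight_expect_expect_expect_le (f : α → β → γ → ℝ) :
    (𝔼 a, 𝔼 b, 𝔼 c, f a b c) ^ 8 ≤ 𝔼 p : α × α, 𝔼 q : β × β, 𝔼 r : γ × γ,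
      f p.1 q.1 r.1 * f p.2 q.1 r.1 * (f p.1 q.2 r.1 * f p.2 q.2 r.1) *
        (f p.1 q.1 r.2 * f p.2 q.1 r.2 * (f p.1 q.2 r.2 * f p.2 q.2 r.2)) := by
  have sq_le : (𝔼 a, 𝔼 b, 𝔼 c, f a b c) ^ 2 ≤
      𝔼 p : α × α, 𝔼 b, 𝔼 c, f p.1 b c * f p.2 b c := by
    simpa only [expect_prod_type (α := β)] using
      sq_expect_expect_le fun a (x : β × γ) ↦ f a x.1 x.2
  calc (𝔼 a, 𝔼 b, 𝔼 c, f a b c) ^ 8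
    _ = (((𝔼 a, 𝔼 b, 𝔼 c, f a b c) ^ 2) ^ 2) ^ 2 := by ring
    _ ≤ ((𝔼 p : α × α, 𝔼 b, 𝔼 c, f p.1 b c * f p.2 b c) ^ 2) ^ 2 := by gcongr
    _ ≤ (𝔼 p : α × α, (𝔼 b, 𝔼 c, f p.1 b c * f p.2 b c) ^ 2) ^ 2 := by
      gcongr
      exact sq_expect_le_expect_sq _
    _ ≤ 𝔼 p : α × α, ((𝔼 b, 𝔼 c, f p.1 b c * f p.2 b c) ^ 2) ^ 2 := sq_expect_le_expect_sq _
    _ = 𝔼 p : α × α, (𝔼 b, 𝔼 c, f p.1 b c * f p.2 b c) ^ 4 := by simp_rw [← pow_mul]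
    _ ≤ _ := expect_le_expect fun p _ ↦ pow_four_expect_expect_le _

lemma expect_mul_two_mul_expect_sub_one_le_expect_triangle {A : α → α → ℝ}
    (hA₀ : ∀ a b, 0 ≤ A a b) (hA₁ : ∀ a b, A a b ≤ 1) (hA : ∀ a b, A a b = A b a) :
    (𝔼 a, 𝔼 b, A a b) * (2 * 𝔼 a, 𝔼 b, A a b - 1) ≤
      𝔼 a, 𝔼 b, 𝔼 c, A a b * A a c * A b c := by
  obtain _ | _ := isEmpty_or_nonempty α
  · simp
  have cherries : 𝔼 a, 𝔼 b, 𝔼 c, A a b * A a c = 𝔼 a, (𝔼 b, A a b) ^ 2 := by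
    simp_rw [sq, Fintype.expect_mul_expect]
  have cherries' : 𝔼 a, 𝔼 b, 𝔼 c, A a b * A b c = 𝔼 a, (𝔼 b, A a b) ^ 2 := by
    rw [expect_comm, ← cherries]
    simp_rw [hA]
  calc (𝔼 a, 𝔼 b, A a b) * (2 * 𝔼 a, 𝔼 b, A a b - 1)
    _ = 2 * (𝔼 a, 𝔼 b, A a b) ^ 2 - 𝔼 a, 𝔼 b, A a b := by ring
    _ ≤ 2 * 𝔼 a, (𝔼 b, A a b) ^ 2 - 𝔼 a, 𝔼 b, A a b := by
      gcongr
      exact sq_expect_le_expect_sq _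
    _ = 𝔼 a, 𝔼 b, 𝔼 c, (A a b * A a c + A a b * A b c - A a b) := by
      simp_rw [expect_sub_distrib, expect_add_distrib, cherries, cherries', Fintype.expect_const]
      ring
    _ ≤ 𝔼 a, 𝔼 b, 𝔼 c, A a b * A a c * A b c := by
      gcongr with a _ b _ c _
      nlinarith [mul_nonneg (hA₀ a b)
        (mul_nonneg (sub_nonneg.2 (hA₁ a c)) (sub_nonneg.2 (hA₁ b c)))]

lemma dens_mul_one_sub_le_one_sub_expect [Nonempty α] {f : α → ℝ} (hf : ∀ a, f a ≤ 1)
    {S : Finset α} {t : ℝ} (hS : ∀ a ∈ S, f a ≤ t) : S.dens * (1 - t) ≤ 1 - 𝔼 a, f a := by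
  rw [← expect_indicator_one, expect_mul, ← Fintype.expect_const (ι := α) (1 : ℝ),
    ← expect_sub_distrib, Fintype.expect_const]
  refine expect_le_expect fun a _ ↦ ?_
  by_cases ha : a ∈ S
  · simp only [Set.indicator_of_mem (mem_coe.2 ha), Pi.one_apply]
    linarith [hS a ha]
  · simpa [ha] using hf a

end Expect

section Density

variable {V : Type*} [DecidableEq V] {F : Finset (Finset V)} {a b c x : V}

lemma card_triple_eq_three : #({a, b, c} : Finset V) = 3 ↔ a ≠ b ∧ a ≠ c ∧ b ≠ c := by
  grind

/-- The indicator of the ordered triples spanning an edge of `F`. -/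
noncomputable def edgeInd (F : Finset (Finset V)) (a b c : V) : ℝ := if {a, b, c} ∈ F then 1 else 0

lemma edgeInd_of_mem (h : {a, b, c} ∈ F) : edgeInd F a b c = 1 := if_pos h

lemma edgeInd_of_notMem (h : {a, b, c} ∉ F) : edgeInd F a b c = 0 := if_neg h

lemma edgeInd_nonneg (F : Finset (Finset V)) (a b c : V) : 0 ≤ edgeInd F a b c := by
  unfold edgeInd; positivity

lemma edgeInd_le_one (F : Finset (Finset V)) (a b c : V) : edgeInd F a b c ≤ 1 := by
  unfold edgeInd; split_ifs <;> norm_num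

lemma edgeInd_swap (F : Finset (Finset V)) (a b c : V) : edgeInd F a b c = edgeInd F a c b := by
  rw [edgeInd, edgeInd, pair_comm]

lemma edgeInd_add_edgeInd_sub_one_le_edgeInd_inter (F G : Finset (Finset V)) (a b c : V) :
    edgeInd F a b c + edgeInd G a b c - 1 ≤ edgeInd (F ∩ G) a b c := by
  by_cases hF : {a, b, c} ∈ F <;> by_cases hG : {a, b, c} ∈ G <;> simp [edgeInd, hF, hG]

variable [Fintype V]

/-- The density of the link graph of `x` in `F` among all ordered pairs of vertices. -/
noncomputable def linkDensity (F : Finset (Finset V)) (x : V) : ℝ := 𝔼 a, 𝔼 b, edgeInd F x a b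

/-- The probability that three independent uniform vertices span an edge of `F`. -/
noncomputable def tripleDensity (F : Finset (Finset V)) : ℝ := 𝔼 x, linkDensity F x

lemma tripleDensity_nonneg (F : Finset (Finset V)) : 0 ≤ tripleDensity F :=
  expect_nonneg fun _ _ ↦ expect_nonneg fun _ _ ↦ expect_nonneg fun _ _ ↦ edgeInd_nonneg ..

lemma linkDensity_le_one (F : Finset (Finset V)) (x : V) : linkDensity F x ≤ 1 := by
  have : Nonempty V := ⟨x⟩
  exact expect_le univ_nonempty fun _ _ ↦ expect_le univ_nonempty fun _ _ ↦ edgeInd_le_one ..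

lemma le_tripleDensity [Nonempty V] {d : ℝ} (h : ∀ v, d ≤ linkDensity F v) :
    d ≤ tripleDensity F :=
  le_expect univ_nonempty fun v _ ↦ h v

lemma tripleDensity_add_tripleDensity_sub_one_le [Nonempty V] (F G : Finset (Finset V)) :
    tripleDensity F + tripleDensity G - 1 ≤ tripleDensity (F ∩ G) := by
  calc tripleDensity F + tripleDensity G - 1
    _ = 𝔼 a, 𝔼 b, 𝔼 c, (edgeInd F a b c + edgeInd G a b c - 1) := by
      simp_rw [expect_sub_distrib, expect_add_distrib, Fintype.expect_const]
      rfl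
    _ ≤ tripleDensity (F ∩ G) :=
      expect_le_expect fun a _ ↦ expect_le_expect fun b _ ↦ expect_le_expect fun c _ ↦
        edgeInd_add_edgeInd_sub_one_le_edgeInd_inter F G a b c

lemma filter_triple_eq {e : Finset V} (he : #e = 3) (hx : x ∈ e) :
    ({p | {x, p.1, p.2} = e} : Finset (V × V)) = (e.erase x).offDiag := by
  ext ⟨a, b⟩
  simp only [mem_filter, mem_univ, true_and, mem_offDiag, mem_erase]
  constructor
  · rintro rfl
    obtain ⟨hxa, hxb, hab⟩ := card_triple_eq_three.1 he
    simp [hxa.symm, hxb.symm, hab]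
  · rintro ⟨⟨hax, ha⟩, ⟨hbx, hb⟩, hab⟩
    refine eq_of_subset_of_card_le (by simp [insert_subset_iff, *]) ?_
    rw [he, card_triple_eq_three.2 ⟨hax.symm, hbx.symm, hab⟩]

lemma card_pairs_triple_mem (hF : (F : Set (Finset V)).Sized 3) (x : V) :
    #{p : V × V | {x, p.1, p.2} ∈ F} = 2 * #{e ∈ F | x ∈ e} := by
  have maps_to : ∀ p ∈ ({p | {x, p.1, p.2} ∈ F} : Finset (V × V)),
      ({x, p.1, p.2} : Finset V) ∈ F.filter (x ∈ ·) := by simp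
  rw [card_eq_sum_card_fiberwise maps_to, mul_comm, ← smul_eq_mul, ← sum_const]
  refine sum_congr rfl fun e he ↦ ?_
  obtain ⟨heF, hxe⟩ := mem_filter.1 he
  have fiber_eq : ({p ∈ {p : V × V | {x, p.1, p.2} ∈ F} | {x, p.1, p.2} = e} : Finset (V × V)) =
      (e.erase x).offDiag := by
    rw [← filter_triple_eq (hF heF) hxe, filter_filter]
    exact filter_congr fun p _ ↦ and_iff_right_of_imp (· ▸ heF)
  rw [fiber_eq, offDiag_card, card_erase_of_mem hxe, hF heF]

lemma card_sq_mul_linkDensity (hF : (F : Set (Finset V)).Sized 3) (x : V) :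
    (Fintype.card V : ℝ) ^ 2 * linkDensity F x = 2 * #{e ∈ F | x ∈ e} := by
  calc (Fintype.card V : ℝ) ^ 2 * linkDensity F x
    _ = ∑ p : V × V, edgeInd F x p.1 p.2 := by
      rw [linkDensity, ← expect_prod_type fun p ↦ edgeInd F x p.1 p.2, ← Fintype.card_mul_expect,
        Fintype.card_prod, Nat.cast_mul, sq]
    _ = (#{p : V × V | {x, p.1, p.2} ∈ F} : ℝ) := sum_boole ..
    _ = 2 * #{e ∈ F | x ∈ e} := by
      rw [card_pairs_triple_mem hF]
      norm_cast

lemma card_pow_three_mul_tripleDensity (hF : (F : Set (Finset V)).Sized 3) :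
    (Fintype.card V : ℝ) ^ 3 * tripleDensity F = 6 * #F := by
  have sum_degree : ∑ v, #{e ∈ F | v ∈ e} = 3 * #F := by
    have := sum_card_bipartiteAbove_eq_sum_card_bipartiteBelow (s := univ) (t := F)
      fun (v : V) e ↦ v ∈ e
    simp only [bipartiteAbove, bipartiteBelow, filter_univ_mem] at this
    rw [this, sum_congr rfl fun e he ↦ hF he, sum_const, smul_eq_mul, mul_comm]
  calc (Fintype.card V : ℝ) ^ 3 * tripleDensity F
    _ = ∑ v, (Fintype.card V : ℝ) ^ 2 * linkDensity F v := by
      rw [← mul_sum, ← Fintype.card_mul_expect (ι := V)]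
      unfold tripleDensity
      ring
    _ = 2 * ((∑ v, #{e ∈ F | v ∈ e} : ℕ) : ℝ) := by
      simp_rw [card_sq_mul_linkDensity hF]
      push_cast
      rw [mul_sum]
    _ = 6 * #F := by
      rw [sum_degree]
      push_cast
      ring

lemma mul_choose_three_le_card (hF : (F : Set (Finset V)).Sized 3) {d : ℝ}
    (hd : d ≤ tripleDensity F) {m : ℕ} (hm : m ≤ Fintype.card V) : d * m.choose 3 ≤ #F := by
  have choose_le : (m.choose 3 : ℝ) ≤ (Fintype.card V : ℝ) ^ 3 / 6 := by
    calc (m.choose 3 : ℝ)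
      _ ≤ (m : ℝ) ^ 3 / 6 := by simpa [Nat.factorial] using Nat.choose_le_pow_div (α := ℝ) 3 m
      _ ≤ (Fintype.card V : ℝ) ^ 3 / 6 := by gcongr
  calc d * m.choose 3
    _ ≤ tripleDensity F * (Fintype.card V ^ 3 / 6) := by
      gcongr
      exact tripleDensity_nonneg F
    _ = #F := by linarith [card_pow_three_mul_tripleDensity hF]

lemma sub_three_div_card_le_linkDensity (hF : (F : Set (Finset V)).Sized 3) {δ : ℝ} (hδ : δ ≤ 1)
    (hx : δ * (Fintype.card V - 1).choose 2 ≤ #{e ∈ F | x ∈ e}) :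
    δ - 3 / Fintype.card V ≤ linkDensity F x := by
  have hV : 0 < Fintype.card V := Fintype.card_pos_iff.2 ⟨x⟩
  have hV₁ : (1 : ℝ) ≤ Fintype.card V := by exact_mod_cast hV
  rw [Nat.cast_choose_two, Nat.cast_pred hV] at hx
  have hlink := card_sq_mul_linkDensity hF x
  have h : (Fintype.card V : ℝ) ^ 2 * (δ - 3 / Fintype.card V) ≤
      (Fintype.card V : ℝ) ^ 2 * linkDensity F x := by
    rw [show (Fintype.card V : ℝ) ^ 2 * (δ - 3 / Fintype.card V) =
      δ * (Fintype.card V : ℝ) ^ 2 - 3 * Fintype.card V by field_simp]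
    nlinarith
  exact le_of_mul_le_mul_left h (by positivity)

end Density

section Octahedra

variable {V : Type} [DecidableEq V] [Fintype V] {F : Finset (Finset V)}

/-- The homomorphisms from `K_{2,2,2}` to `F`, recorded as three pairs of vertices whose eight
transversals are edges of `F`. The two vertices of a pair may coincide. -/
noncomputable def octahedra (F : Finset (Finset V)) : Finset ((V × V) × (V × V) × (V × V)) :=
  {t | ∀ a ∈ ({t.1.1, t.1.2} : Finset V), ∀ b ∈ ({t.2.1.1, t.2.1.2} : Finset V),
    ∀ c ∈ ({t.2.2.1, t.2.2.2} : Finset V), {a, b, c} ∈ F}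

lemma tripleDensity_pow_eight_le_dens_octahedra (F : Finset (Finset V)) :
    tripleDensity F ^ 8 ≤ (octahedra F).dens := by
  refine (pow_eight_expect_expect_expect_le (edgeInd F)).trans_eq ?_
  simp_rw [← expect_indicator_one, expect_prod_type (α := V × V)]
  congr! with p _ q _ r _
  simp only [edgeInd, ite_zero_mul_ite_zero, mul_one, Set.indicator_apply, Pi.one_apply, mem_coe]
  congr 1
  simp only [octahedra, mem_filter, mem_univ, true_and, mem_insert, mem_singleton,
    forall_eq_or_imp, forall_eq, eq_iff_iff]
  tauto

/-- The members of `octahedra F` each of whose three pairs has two distinct vertices. If `F` is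
3-uniform, all six vertices are then distinct, so these are the labelled copies of `K_{2,2,2}`. -/
noncomputable def properOctahedra (F : Finset (Finset V)) :
    Finset ((V × V) × (V × V) × (V × V)) :=
  {t ∈ octahedra F | t.1.1 ≠ t.1.2 ∧ t.2.1.1 ≠ t.2.1.2 ∧ t.2.2.1 ≠ t.2.2.2}

lemma card_octahedra_le_card_properOctahedra_add (F : Finset (Finset V)) :
    #(octahedra F) ≤ #(properOctahedra F) + 3 * Fintype.card V ^ 5 := by
  set D : Finset (V × V) := diag univ
  have hD : #D = Fintype.card V := by rw [diag_card, card_univ]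
  have cover : octahedra F ⊆
      properOctahedra F ∪ (D ×ˢ univ ∪ (univ ×ˢ D ×ˢ univ ∪ univ ×ˢ univ ×ˢ D)) := by
    intro t ht
    simp only [mem_union, mem_product, mem_univ, true_and, and_true, D, mem_diag,
      properOctahedra, mem_filter, ht]
    tauto
  calc #(octahedra F)
    _ ≤ #(properOctahedra F) +
        (#(D ×ˢ univ) + (#(univ ×ˢ D ×ˢ univ) + #(univ ×ˢ univ ×ˢ D))) :=
      (card_le_card cover).trans <| (card_union_le _ _).trans <| by
        gcongr; exact (card_union_le _ _).trans (by gcongr; exact card_union_le _ _)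
    _ = #(properOctahedra F) + 3 * Fintype.card V ^ 5 := by
      simp only [card_product, card_univ, Fintype.card_prod, hD]
      ring

lemma image_properOctahedra_mem_tripartiteCopies (hF : (F : Set (Finset V)).Sized 3)
    {t : (V × V) × (V × V) × (V × V)} (ht : t ∈ properOctahedra F) :
    ({t.1.1, t.1.2}, {t.2.1.1, t.2.1.2}, {t.2.2.1, t.2.2.2}) ∈ tripartiteCopies F 2 := by
  simp only [properOctahedra, octahedra, mem_filter, mem_univ, true_and] at ht
  obtain ⟨hmem, ha, hb, hc⟩ := ht
  have distinct := fun a ha b hb c hc ↦ card_triple_eq_three.1 (hF (hmem a ha b hb c hc))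
  simp only [tripartiteCopies, mem_filter, mem_univ, true_and]
  refine ⟨card_pair ha, card_pair hb, card_pair hc, ?_, ?_, ?_, hmem⟩ <;>
    refine disjoint_left.2 fun v hv hv' ↦ ?_
  · exact (distinct v hv v hv' _ (mem_insert_self _ _)).1 rfl
  · exact (distinct v hv _ (mem_insert_self _ _) v hv').2.1 rfl
  · exact (distinct _ (mem_insert_self _ _) v hv v hv').2.2 rfl

lemma card_properOctahedra_le_eight_mul (hF : (F : Set (Finset V)).Sized 3) :
    #(properOctahedra F) ≤ 8 * #(tripartiteCopies F 2) := by
  refine card_le_mul_card_image_of_maps_to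
    (fun t ht ↦ image_properOctahedra_mem_tripartiteCopies hF ht) 8 ?_
  rintro ⟨A, B, C⟩ hABC
  simp only [tripartiteCopies, mem_filter, mem_univ, true_and] at hABC
  obtain ⟨hA, hB, hC, -⟩ := hABC
  calc _ ≤ #(A.offDiag ×ˢ B.offDiag ×ˢ C.offDiag) := card_le_card fun t ht ↦ ?_
    _ = 8 := by simp only [card_product, offDiag_card, hA, hB, hC]
  simp only [properOctahedra, mem_filter, Prod.mk.injEq] at ht
  obtain ⟨⟨-, ha, hb, hc⟩, rfl, rfl, rfl⟩ := ht
  simp [ha, hb, hc]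

lemma tripleDensity_pow_eight_mul_le (hF : (F : Set (Finset V)).Sized 3) :
    tripleDensity F ^ 8 * (Fintype.card V : ℝ) ^ 6 ≤
      8 * #(tripartiteCopies F 2) + 3 * (Fintype.card V : ℝ) ^ 5 := by
  calc tripleDensity F ^ 8 * (Fintype.card V : ℝ) ^ 6
    _ ≤ (octahedra F).dens * (Fintype.card V : ℝ) ^ 6 := by
      gcongr
      exact tripleDensity_pow_eight_le_dens_octahedra F
    _ = #(octahedra F) := by
      rw [← nnratCast_dens_mul_natCast_card]
      simp only [Fintype.card_prod, Nat.cast_mul]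
      ring
    _ ≤ 8 * #(tripartiteCopies F 2) + 3 * (Fintype.card V : ℝ) ^ 5 := by
      have := card_octahedra_le_card_properOctahedra_add F
      have := card_properOctahedra_le_eight_mul hF
      norm_cast
      lia

lemma pow_eight_div_mul_le_card_tripartiteCopies (hF : (F : Set (Finset V)).Sized 3) {d : ℝ}
    (hd₀ : 0 ≤ d) (hd : d ≤ tripleDensity F) (hV : 6 ≤ d ^ 8 * Fintype.card V) :
    d ^ 8 / 16 * (Fintype.card V : ℝ) ^ 6 ≤ #(tripartiteCopies F 2) := by
  have lower : d ^ 8 * (Fintype.card V : ℝ) ^ 6 ≤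
      8 * #(tripartiteCopies F 2) + 3 * (Fintype.card V : ℝ) ^ 5 :=
    le_trans (by gcongr) (tripleDensity_pow_eight_mul_le hF)
  have degenerate : 6 * (Fintype.card V : ℝ) ^ 5 ≤ d ^ 8 * Fintype.card V * Fintype.card V ^ 5 := by
    gcongr
  linarith

end Octahedra

section LargePairs

variable {V : Type} [DecidableEq V] [Fintype V] {H : Finset (Finset V)}

lemma sized_largeSub (hH : (H : Set (Finset V)).Sized 3) :
    (largeSub H : Set (Finset V)).Sized 3 :=
  hH.mono (coe_subset.2 (filter_subset _ _))

lemma sized_triLink (H : Finset (Finset V)) (x : V) : (triLink H x : Set (Finset V)).Sized 3 :=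
  (Set.sized_powersetCard univ 3).mono (coe_subset.2 (filter_subset _ _))

/-- The vertices that do not form a `(1/3)`-large pair with `x`. -/
noncomputable def smallPartners (H : Finset (Finset V)) (x : V) : Finset V :=
  {v | (coDeg H x v : ℝ) < 1 / 3 * (Fintype.card V - 2)}

lemma card_mul_expect_edgeInd_le_coDeg (hH : (H : Set (Finset V)).Sized 3) (x v : V) :
    Fintype.card V * 𝔼 w, edgeInd H x v w ≤ (coDeg H x v : ℝ) := by
  have sum_eq : ∑ w, edgeInd H x v w = (#{w | {x, v, w} ∈ H} : ℝ) := sum_boole ..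
  rw [Fintype.card_mul_expect, sum_eq, Nat.cast_le]
  refine card_le_card_of_injOn (fun w ↦ {x, v, w}) (fun w hw ↦ ?_) fun w hw w' _ hww' ↦ ?_
  · simpa using hw
  · have hw3 := card_triple_eq_three.1 (hH (mem_filter.1 hw).2)
    have triple_eq : ({x, v, w} : Finset V) = {x, v, w'} := hww'
    have : w ∈ ({x, v, w'} : Finset V) := by simp [← triple_eq]
    grind

lemma expect_edgeInd_le_of_mem_smallPartners (hH : (H : Set (Finset V)).Sized 3) {x v : V}
    (hv : v ∈ smallPartners H x) : 𝔼 w, edgeInd H x v w ≤ 1 / 3 := by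
  have hV : (0 : ℝ) < Fintype.card V := Nat.cast_pos.2 (Fintype.card_pos_iff.2 ⟨x⟩)
  have hcodeg : (coDeg H x v : ℝ) < 1 / 3 * (Fintype.card V - 2) := (mem_filter.1 hv).2
  refine le_of_mul_le_mul_left ?_ hV
  linarith [card_mul_expect_edgeInd_le_coDeg hH x v]

lemma dens_smallPartners_le (hH : (H : Set (Finset V)).Sized 3) (x : V) :
    (smallPartners H x).dens ≤ 3 / 2 * (1 - linkDensity H x) := by
  have : Nonempty V := ⟨x⟩
  have := dens_mul_one_sub_le_one_sub_expect
    (fun v ↦ expect_le univ_nonempty fun w _ ↦ edgeInd_le_one H x v w)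
    fun v ↦ expect_edgeInd_le_of_mem_smallPartners hH
  unfold linkDensity
  linarith

lemma mem_largeSub_or_mem_smallPartners (hH : (H : Set (Finset V)).Sized 3) {x v w : V}
    (h : {x, v, w} ∈ H) :
    {x, v, w} ∈ largeSub H ∨ v ∈ smallPartners H x ∧ w ∈ smallPartners H x := by
  obtain ⟨hxv, hxw, -⟩ := card_triple_eq_three.1 (hH h)
  by_contra! hsmall
  have ⟨u, hu, hxu, hlarge⟩ : ∃ u ∈ ({x, v, w} : Finset V), x ≠ u ∧ u ∉ smallPartners H x := by
    by_cases hv : v ∈ smallPartners H x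
    · exact ⟨w, by simp, hxw, hsmall.2 hv⟩
    · exact ⟨v, by simp, hxv, hv⟩
  refine hsmall.1 (mem_filter.2 ⟨h, x, by simp, u, hu, hxu, ?_⟩)
  simpa [smallPartners] using hlarge

lemma edgeInd_le_edgeInd_largeSub_add (hH : (H : Set (Finset V)).Sized 3) (x v w : V) :
    edgeInd H x v w ≤ edgeInd (largeSub H) x v w +
      Set.indicator (smallPartners H x) 1 v * Set.indicator (smallPartners H x) 1 w := by
  have ind_nonneg (u : V) : (0 : ℝ) ≤ Set.indicator (smallPartners H x) 1 u :=
    Set.indicator_nonneg (fun _ _ ↦ zero_le_one) u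
  have small_nonneg := mul_nonneg (ind_nonneg v) (ind_nonneg w)
  by_cases h : {x, v, w} ∈ H
  · rw [edgeInd_of_mem h]
    obtain hlarge | ⟨hv, hw⟩ := mem_largeSub_or_mem_smallPartners hH h
    · rw [edgeInd_of_mem hlarge]
      linarith
    · simpa [hv, hw] using edgeInd_nonneg (largeSub H) x v w
  · rw [edgeInd_of_notMem h]
    exact add_nonneg (edgeInd_nonneg ..) small_nonneg

lemma linkDensity_sub_sq_le_linkDensity_largeSub (hH : (H : Set (Finset V)).Sized 3) (x : V) :
    linkDensity H x - (3 / 2 * (1 - linkDensity H x)) ^ 2 ≤ linkDensity (largeSub H) x := by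
  have lost : linkDensity H x ≤ linkDensity (largeSub H) x + (smallPartners H x).dens ^ 2 := by
    calc linkDensity H x
      _ ≤ 𝔼 v, 𝔼 w, (edgeInd (largeSub H) x v w +
          Set.indicator (smallPartners H x) 1 v * Set.indicator (smallPartners H x) 1 w) :=
        expect_le_expect fun v _ ↦ expect_le_expect fun w _ ↦
          edgeInd_le_edgeInd_largeSub_add hH x v w
      _ = linkDensity (largeSub H) x + (smallPartners H x).dens ^ 2 := by
        simp_rw [expect_add_distrib, ← Fintype.expect_mul_expect, expect_indicator_one, ← sq]
        rfl
  have : ((smallPartners H x).dens : ℝ) ^ 2 ≤ (3 / 2 * (1 - linkDensity H x)) ^ 2 := by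
    gcongr
    exact dens_smallPartners_le hH x
  linarith

lemma triple_mem_triLink (hH : (H : Set (Finset V)).Sized 3) {x a b c : V}
    (hab : {x, a, b} ∈ largeSub H) (hac : {x, a, c} ∈ largeSub H) (hbc : {x, b, c} ∈ largeSub H) :
    {a, b, c} ∈ triLink H x := by
  have distinct {u v w : V} (h : {u, v, w} ∈ largeSub H) :=
    card_triple_eq_three.1 (sized_largeSub hH h)
  have habc := card_triple_eq_three.2 ⟨(distinct hab).2.2, (distinct hac).2.2, (distinct hbc).2.2⟩
  refine mem_filter.2 ⟨mem_powersetCard.2 ⟨subset_univ _, habc⟩, fun p hp ↦ ?_⟩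
  obtain ⟨hsub, hcard⟩ := mem_powersetCard.1 hp
  obtain ⟨u, v, huv, rfl⟩ := card_eq_two.1 hcard
  obtain ⟨hu, hv⟩ := insert_subset_iff.1 hsub
  grind [pair_comm]

lemma edgeInd_mul_edgeInd_mul_edgeInd_le (hH : (H : Set (Finset V)).Sized 3) (x a b c : V) :
    edgeInd (largeSub H) x a b * edgeInd (largeSub H) x a c * edgeInd (largeSub H) x b c ≤
      edgeInd (triLink H x) a b c := by
  by_cases h : {a, b, c} ∈ triLink H x
  · rw [edgeInd_of_mem h]
    exact mul_le_one₀ (mul_le_one₀ (edgeInd_le_one ..) (edgeInd_nonneg ..) (edgeInd_le_one ..))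
      (edgeInd_nonneg ..) (edgeInd_le_one ..)
  · have not_all : ¬(({x, a, b} ∈ largeSub H ∧ {x, a, c} ∈ largeSub H) ∧ {x, b, c} ∈ largeSub H) :=
      fun ⟨⟨hab, hac⟩, hbc⟩ ↦ h (triple_mem_triLink hH hab hac hbc)
    simp only [edgeInd, ite_zero_mul_ite_zero, if_neg not_all, if_neg h, le_refl]

lemma linkDensity_mul_le_tripleDensity_triLink (hH : (H : Set (Finset V)).Sized 3) (x : V) :
    linkDensity (largeSub H) x * (2 * linkDensity (largeSub H) x - 1) ≤
      tripleDensity (triLink H x) :=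
  (expect_mul_two_mul_expect_sub_one_le_expect_triangle (edgeInd_nonneg (largeSub H) x)
    (edgeInd_le_one _ x) (edgeInd_swap _ x)).trans <|
    expect_le_expect fun a _ ↦ expect_le_expect fun b _ ↦ expect_le_expect fun c _ ↦
      edgeInd_mul_edgeInd_mul_edgeInd_le hH x a b c

end LargePairs

/-- There is `c > 0` such that for all large `n`, in every 3-graph `H` on `n` vertices
with minimum vertex degree at least `0.8·C(n-1,2)` and every vertex `x`:
(a) `|T^x| ≥ 0.296262·C(n-1,3)`; (b) `|T^x ∩ H'| ≥ 0.005·C(n-1,3)`;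
(c) `T^x ∩ H'` contains at least `c·n⁶` copies of `K_{2,2,2}`. -/
theorem stmt_11 :
    ∃ c : ℝ, 0 < c ∧ ∃ n₀ : ℕ, ∀ n : ℕ, n₀ ≤ n →
    ∀ (V : Type) [DecidableEq V] [Fintype V], Fintype.card V = n →
    ∀ H : Finset (Finset V), (∀ e ∈ H, e.card = 3) →
    (∀ v : V, (0.8 : ℝ) * ((n - 1).choose 2 : ℝ) ≤
      ((H.filter fun e => v ∈ e).card : ℝ)) →
    ∀ x : V,
      (0.296262 : ℝ) * ((n - 1).choose 3 : ℝ) ≤ ((triLink H x).card : ℝ) ∧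
      (0.005 : ℝ) * ((n - 1).choose 3 : ℝ) ≤ ((triLink H x ∩ largeSub H).card : ℝ) ∧
      c * (n : ℝ) ^ 6 ≤ ((tripartiteCopies (triLink H x ∩ largeSub H) 2).card : ℝ) := by
  refine ⟨0.005 ^ 8 / 16, by norm_num, 6 * 200 ^ 8, ?_⟩
  rintro _ hn V _ _ rfl H hH hdeg x
  have : Nonempty V := ⟨x⟩
  replace hH : (H : Set (Finset V)).Sized 3 := hH
  have hn' : (6 * 200 ^ 8 : ℝ) ≤ Fintype.card V := by exact_mod_cast hn
  have hlink (v : V) : 0.7999 ≤ linkDensity H v := by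
    have : (3 : ℝ) / Fintype.card V ≤ 0.0001 := by
      rw [div_le_iff₀ (by linarith)]
      linarith
    linarith [sub_three_div_card_le_linkDensity hH (by norm_num) (hdeg v)]
  have hlink' (v : V) : 0.709 ≤ linkDensity (largeSub H) v := by
    nlinarith [linkDensity_sub_sq_le_linkDensity_largeSub hH v,
      mul_nonneg (sub_nonneg.2 (hlink v)) (sub_nonneg.2 (linkDensity_le_one H v))]
  have hL : 0.709 ≤ tripleDensity (largeSub H) := le_tripleDensity hlink'
  have hT : 0.296262 ≤ tripleDensity (triLink H x) := by
    nlinarith [linkDensity_mul_le_tripleDensity_triLink hH x, hlink' x]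
  have hTL : 0.005 ≤ tripleDensity (triLink H x ∩ largeSub H) := by
    linarith [tripleDensity_add_tripleDensity_sub_one_le (triLink H x) (largeSub H)]
  have hTL₃ : ((triLink H x ∩ largeSub H : Finset (Finset V)) : Set (Finset V)).Sized 3 :=
    (sized_triLink H x).mono (coe_subset.2 inter_subset_left)
  exact ⟨mul_choose_three_le_card (sized_triLink H x) hT (Nat.sub_le _ _),
    mul_choose_three_le_card hTL₃ hTL (Nat.sub_le _ _),
    pow_eight_div_mul_le_card_tripartiteCopies hTL₃ (by norm_num) hTL (by linarith)⟩
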